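/- Let f be a cellular automaton on A^ℤ whose restriction to ω̃(f) is eventually oblique, i.e., for some n ∈ ℕ the map f^n restricted to ω̃(f) has a neighborhood contained in (−∞, −1] or in [1, ∞). Then for every word w ∈ A*: w ∈ L(ω̃(f)) if and only if for every cylinder set [u]_j ⊆ A^ℤ there exist infinitely many t ∈ ℕ with f^t([u]_j) ∩ [w] ≠ ∅. -/

import Mathlib

open Filter Set Function

namespace Gls

variable {A : Type*}

/-- The left shift map on `A^ℤ`. -/
def shift (x : ℤ → A) : ℤ → A := fun i => x (i + 1)

/-- A cellular automaton: a continuous shift-commuting self-map of the full shift. -/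
def IsCA [TopologicalSpace A] (f : (ℤ → A) → (ℤ → A)) : Prop :=
  Continuous f ∧ f ∘ shift = shift ∘ f

/-- The set of limit points of the forward orbit of `x` under `f`. -/
def omegaSet [TopologicalSpace A] (f : (ℤ → A) → (ℤ → A)) (x : ℤ → A) : Set (ℤ → A) :=
  {y | MapClusterPt y atTop fun t => f^[t] x}

/-- The realm of attraction of `Y`. -/
def realm [TopologicalSpace A] (f : (ℤ → A) → (ℤ → A)) (Y : Set (ℤ → A)) : Set (ℤ → A) :=
  {x | omegaSet f x ⊆ Y}

/-- The generic limit set: the intersection of all closed sets whose realm is comeager. -/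
def genLimitSet [TopologicalSpace A] (f : (ℤ → A) → (ℤ → A)) : Set (ℤ → A) :=
  ⋂₀ {C | IsClosed C ∧ realm f C ∈ residual (ℤ → A)}

/-- The word `x_{[i, i+n)}` of length `n` read in the configuration `x` from position `i`. -/
def word (x : ℤ → A) (i : ℤ) (n : ℕ) : List A :=
  (List.range n).map fun k => x (i + k)

/-- The cylinder set `[w]_i`. -/
def cylinder (w : List A) (i : ℤ) : Set (ℤ → A) := {x | word x i w.length = w}

/-- The language of `X`: all finite words occurring in points of `X`. -/
def lang (X : Set (ℤ → A)) : Set (List A) :=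
  {w | ∃ x ∈ X, ∃ i : ℤ, word x i w.length = w}


/-- The restriction of `f` to `X` is eventually oblique: for some `n`, the map `f^n`
restricted to `X` has a neighborhood `[a, b]` contained in `(-∞, -1]` or in `[1, ∞)`,
i.e. for `x ∈ X`, the symbol `f^n(x)_0` only depends on `x_{[a,b]}`. -/
def EventuallyOblique {A : Type*} (f : (ℤ → A) → (ℤ → A)) (X : Set (ℤ → A)) : Prop :=
  ∃ (n : ℕ) (a b : ℤ), a ≤ b ∧ (b ≤ -1 ∨ 1 ≤ a) ∧
    ∀ x ∈ X, ∀ y ∈ X, (∀ i : ℤ, a ≤ i → i ≤ b → x i = y i) → f^[n] x 0 = f^[n] y 0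

/-- translation by `p` -/
def tau (p : ℤ) (x : ℤ → A) : ℤ → A := fun k => x (k + p)

/-- basic neighbourhood -/
def bx (x : ℤ → A) (N : ℕ) : Set (ℤ → A) := {y | ∀ i : ℤ, -(N : ℤ) ≤ i → i ≤ N → y i = x i}

lemma bx_self (x : ℤ → A) (N : ℕ) : x ∈ bx x N := fun _ _ _ => rfl

lemma bx_mono (x : ℤ → A) {N M : ℕ} (h : N ≤ M) : bx x M ⊆ bx x N :=
  fun _ hy i h1 h2 => hy i (by omega) (by omega)

section Top

set_option linter.unusedSectionVars false

variable [TopologicalSpace A] [DiscreteTopology A]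

lemma bx_open (x : ℤ → A) (N : ℕ) : IsOpen (bx x N) := by
  have : bx x N = ⋂ i ∈ Finset.Icc (-(N : ℤ)) N, {y : ℤ → A | y i = x i} := by
    ext y; simp [bx]
  rw [this]
  refine isOpen_biInter_finset fun i _ => ?_
  exact (isOpen_discrete ({x i} : Set A)).preimage (continuous_apply (A := fun _ : ℤ => A) i)

lemma exists_bx {W : Set (ℤ → A)} (hW : IsOpen W) {x : ℤ → A} (hx : x ∈ W) :
    ∃ N : ℕ, bx x N ⊆ W := by
  obtain ⟨I, u, hu, hs⟩ := isOpen_pi_iff.1 hW x hx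
  refine ⟨I.sup Int.natAbs, fun y hy => hs ?_⟩
  intro i hi
  have h : i.natAbs ≤ I.sup Int.natAbs := Finset.le_sup (f := Int.natAbs) hi
  rw [hy i (by omega) (by omega)]
  exact (hu i hi).2

lemma tau_cont (p : ℤ) : Continuous (tau p : (ℤ → A) → (ℤ → A)) :=
  continuous_pi fun k => continuous_apply (k + p)

/-- homeomorphism version -/
def tauH (p : ℤ) : (ℤ → A) ≃ₜ (ℤ → A) where
  toFun := tau p
  invFun := tau (-p)
  left_inv x := by funext k; simp [tau]
  right_inv x := by funext k; simp [tau]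
  continuous_toFun := tau_cont p
  continuous_invFun := tau_cont (-p)

lemma tau_comm {f : (ℤ → A) → (ℤ → A)} (hf : IsCA f) (p : ℤ) (x : ℤ → A) :
    f (tau p x) = tau p (f x) := by
  have h1 : ∀ x, f (tau 1 x) = tau 1 (f x) := fun x => congrFun hf.2 x
  have h2 : ∀ x, f (tau (-1) x) = tau (-1) (f x) := by
    intro x
    have := h1 (tau (-1) x)
    have e : tau 1 (tau (-1) x) = x := by funext k; simp [tau]
    rw [e] at this
    rw [this]; funext k; simp [tau]
  induction p using Int.induction_on with
  | zero =>
    have e : ∀ x : ℤ → A, tau 0 x = x := fun x => by funext k; simp [tau]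
    rw [e, e]
  | succ i ih =>
    have e : ∀ x : ℤ → A, tau ((i : ℤ) + 1) x = tau 1 (tau i x) := fun x => by
      funext k; simp only [tau]; congr 1; ring
    rw [e, e, h1, ih]
  | pred i ih =>
    have e : ∀ x : ℤ → A, tau (-(i : ℤ) - 1) x = tau (-1) (tau (-i) x) := fun x => by
      funext k; simp only [tau]; congr 1; ring
    rw [e, e, h2, ih]

lemma tau_comm_iter {f : (ℤ → A) → (ℤ → A)} (hf : IsCA f) (p : ℤ) (t : ℕ) (x : ℤ → A) :
    f^[t] (tau p x) = tau p (f^[t] x) :=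
  ((Function.Commute.iterate_left (f := f) (g := tau p) (fun x => tau_comm hf p x) t) x)

lemma gls_tau {f : (ℤ → A) → (ℤ → A)} (hf : IsCA f) (p : ℤ) {x : ℤ → A}
    (hx : x ∈ genLimitSet f) : tau p x ∈ genLimitSet f := by
  rintro C ⟨hC, hr⟩
  refine hx (tau p ⁻¹' C) ⟨hC.preimage (tau_cont p), ?_⟩
  have h : tau p ⁻¹' (realm f C) ∈ residual (ℤ → A) := by
    rw [← (tauH (A := A) p).residual_map_eq] at hr
    exact hr
  refine mem_of_superset h ?_
  intro z hz y hy
  apply hz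
  have := MapClusterPt.continuousAt_comp (tau_cont p).continuousAt hy
  have e : tau p ∘ (fun t => f^[t] z) = fun t => f^[t] (tau p z) := by
    funext t; exact (tau_comm_iter hf p t z).symm
  rw [e] at this
  exact this

variable [Fintype A]

lemma gls_eventually {f : (ℤ → A) → (ℤ → A)} {G : Set (ℤ → A)} (hG : IsOpen G)
    (h : genLimitSet f ⊆ G) : {x | ∀ᶠ t in atTop, f^[t] x ∈ G} ∈ residual (ℤ → A) := by
  let ι := {C : Set (ℤ → A) // IsClosed C ∧ realm f C ∈ residual (ℤ → A)}
  have : Nonempty ι := ⟨⟨univ, isClosed_univ, by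
    have : realm f univ = univ := by ext; simp [realm]
    rw [this]; exact univ_mem⟩⟩
  obtain ⟨⟨C, hC, hr⟩, hCG⟩ := exists_subset_nhds_of_compactSpace (V := fun i : ι => i.1)
    (by
      rintro ⟨C, hC, hr⟩ ⟨D, hD, hs⟩
      refine ⟨⟨C ∩ D, hC.inter hD, ?_⟩, inter_subset_left, inter_subset_right⟩
      exact mem_of_superset (inter_mem hr hs) fun x hx => subset_inter hx.1 hx.2)
    (fun i => i.2.1) (U := G) (by
      intro x hx
      refine hG.mem_nhds (h ?_)
      rintro C hC
      exact mem_iInter.1 hx ⟨C, hC⟩)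
  refine mem_of_superset hr fun x hx => ?_
  by_contra hn
  have hfr : ∃ᶠ t in atTop, f^[t] x ∈ Gᶜ := by
    exact Filter.not_eventually.1 hn
  obtain ⟨y, hy, hy'⟩ := (hG.isClosed_compl.isCompact).exists_mapClusterPt_of_frequently hfr
  exact hy (hCG (hx hy'))

lemma gls_subset {f : (ℤ → A) → (ℤ → A)} {C : Set (ℤ → A)} (hC : IsClosed C)
    (h : {x | ∀ᶠ t in atTop, f^[t] x ∈ C} ∈ residual (ℤ → A)) : genLimitSet f ⊆ C := by
  refine sInter_subset_of_mem ⟨hC, mem_of_superset h ?_⟩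
  intro x hx y hy
  exact hC.mem_of_mapClusterPt hy hx

lemma gls_closed (f : (ℤ → A) → (ℤ → A)) : IsClosed (genLimitSet f) :=
  isClosed_sInter fun _ h => h.1

lemma screen {f : (ℤ → A) → (ℤ → A)} (hf : Continuous f) {G : Set (ℤ → A)} (hG : IsOpen G)
    (h : genLimitSet f ⊆ G) (x : ℤ → A) (N : ℕ) :
    ∃ y ∈ bx x N, ∃ M T : ℕ, N ≤ M ∧ bx y M ⊆ bx x N ∧
      ∀ z ∈ bx y M, ∀ t, T ≤ t → f^[t] z ∈ G := by
  obtain ⟨G', hG', h1, h2⟩ := normal_exists_closure_subset (gls_closed f) hG h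
  obtain ⟨s, hs, hsG, hsd⟩ := mem_residual.1 (gls_eventually hG' h1)
  have hd := hsG.dense_iUnion_interior_of_closed hsd
    (f := fun T : ℕ => {z | ∀ t, T ≤ t → f^[t] z ∈ closure G'})
    (by
      intro T
      simp only [ofPred_forall]
      exact isClosed_iInter fun t => isClosed_iInter fun _ =>
        isClosed_closure.preimage (hf.iterate t))
    (by
      intro z hz
      obtain ⟨T, hT⟩ := eventually_atTop.1 (hs hz)
      exact mem_iUnion.2 ⟨T, fun t ht => subset_closure (hT t ht)⟩)
  obtain ⟨y, hy, hy'⟩ := hd.inter_open_nonempty _ (bx_open x N) ⟨x, bx_self x N⟩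
  obtain ⟨T, hT⟩ := mem_iUnion.1 hy'
  obtain ⟨M, hM⟩ := exists_bx (isOpen_interior) hT
  refine ⟨y, hy, max N M, T, le_max_left _ _, ?_, ?_⟩
  · intro z hz i h1 h2
    rw [hz i (by omega) (by omega), hy i h1 h2]
  · intro z hz t ht
    exact h2 (interior_subset (hM (bx_mono y (le_max_right N M) hz)) t ht)

lemma enabling {f : (ℤ → A) → (ℤ → A)} {O : Set (ℤ → A)} (hO : IsOpen O) {x : ℤ → A}
    (hx : x ∈ genLimitSet f) (hxO : x ∈ O) :
    ∃ (v : ℤ → A) (N : ℕ), ∀ y ∈ bx v N, ∀ M : ℕ, bx y M ⊆ bx v N → ∀ t0 : ℕ,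
      ∃ t, t0 ≤ t ∧ ∃ z ∈ bx y M, f^[t] z ∈ O := by
  by_contra! hcon
  have : genLimitSet f ⊆ Oᶜ := by
    refine gls_subset hO.isClosed_compl ?_
    refine mem_of_superset (residual_of_dense_open
      (s := ⋃₀ {W | IsOpen W ∧ ∃ t0 : ℕ, ∀ t, t0 ≤ t → ∀ z ∈ W, f^[t] z ∉ O}) ?_ ?_) ?_
    · exact isOpen_sUnion fun W hW => hW.1
    · rw [dense_iff_inter_open]
      rintro U hU ⟨v, hv⟩
      obtain ⟨N, hN⟩ := exists_bx hU hv
      obtain ⟨y, hy, M, hM, t0, ht⟩ := hcon v N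
      exact ⟨y, hN hy, _, ⟨bx_open y M, t0, fun t h z hz => ht t h z hz⟩, bx_self y M⟩
    · rintro z ⟨W, ⟨-, t0, ht⟩, hz⟩
      exact eventually_atTop.2 ⟨t0, fun t h => ht t h z hz⟩
  exact this hx hxO

lemma exists_radius {f : (ℤ → A) → (ℤ → A)} (hf : Continuous f) :
    ∃ r : ℕ, ∀ x y : ℤ → A, y ∈ bx x r → f y 0 = f x 0 := by
  have h : ∀ x : ℤ → A, ∃ N : ℕ, bx x N ⊆ {y | f y 0 = f x 0} := fun x =>
    exists_bx ((isOpen_discrete {f x 0}).preimage ((continuous_apply 0).comp hf)) rfl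
  choose N hN using h
  obtain ⟨s, -, hs⟩ := isCompact_univ.elim_nhds_subcover (fun x => bx x (N x))
    (fun x _ => (bx_open x (N x)).mem_nhds (bx_self x _))
  refine ⟨s.sup N, fun x y hy => ?_⟩
  obtain ⟨c, hc, hxc⟩ := mem_iUnion₂.1 (hs (mem_univ x))
  have hle : N c ≤ s.sup N := Finset.le_sup hc
  have hyc : y ∈ bx c (N c) := fun i h1 h2 => by
    rw [hy i (by omega) (by omega), hxc i h1 h2]
  rw [show f y 0 = f c 0 from hN c hyc, show f x 0 = f c 0 from hN c hxc]

lemma radius_at {f : (ℤ → A) → (ℤ → A)} (hf : IsCA f) {r : ℕ}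
    (hr : ∀ x y : ℤ → A, y ∈ bx x r → f y 0 = f x 0) (x y : ℤ → A) (i : ℤ)
    (h : ∀ k, i - r ≤ k → k ≤ i + r → y k = x k) : f y i = f x i := by
  have := hr (tau i x) (tau i y) (fun k h1 h2 => h (k + i) (by omega) (by omega))
  rw [tau_comm hf, tau_comm hf] at this
  simpa [tau] using this

/-- propagation of one-sided agreement -/
lemma propagate {f : (ℤ → A) → (ℤ → A)} (hf : IsCA f) {r : ℕ}
    (hr : ∀ x y : ℤ → A, y ∈ bx x r → f y 0 = f x 0) {e : ℤ} (he : e = 1 ∨ e = -1)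
    (x y : ℤ → A) (c : ℤ) (h : ∀ i, e * i ≤ c → y i = x i) (t : ℕ) :
    ∀ i, e * i ≤ c - r * t → f^[t] y i = f^[t] x i := by
  induction t with
  | zero => simpa using h
  | succ t ih =>
    intro i hi
    rw [iterate_succ_apply', iterate_succ_apply']
    refine radius_at hf hr _ _ _ fun k h1 h2 => ih k ?_
    push_cast at hi
    rw [mul_add] at hi
    rcases he with rfl | rfl <;> linarith

/-- oblique with positive exponent, signed version -/
lemma oblique_pos {f : (ℤ → A) → (ℤ → A)} (hf : IsCA f)
    (hob : EventuallyOblique f (genLimitSet f)) :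
    ∃ (n : ℕ) (e : ℤ) (K : ℕ), 1 ≤ n ∧ (e = 1 ∨ e = -1) ∧
      ∀ x ∈ genLimitSet f, ∀ y ∈ genLimitSet f,
        (∀ i : ℤ, -(K : ℤ) ≤ e * i → e * i ≤ -1 → y i = x i) → f^[n] y 0 = f^[n] x 0 := by
  obtain ⟨n, a, b, hab, hs, h⟩ := hob
  obtain ⟨e, he, hea⟩ : ∃ e : ℤ, (e = 1 ∨ e = -1) ∧ ∀ i, a ≤ i → i ≤ b → e * i ≤ -1 ∧
      -((a.natAbs + b.natAbs : ℕ) : ℤ) ≤ e * i := by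
    rcases hs with hs | hs
    · exact ⟨1, Or.inl rfl, fun i h1 h2 => by omega⟩
    · exact ⟨-1, Or.inr rfl, fun i h1 h2 => by omega⟩
  have key : ∀ x ∈ genLimitSet f, ∀ y ∈ genLimitSet f,
        (∀ i : ℤ, -((a.natAbs + b.natAbs : ℕ) : ℤ) ≤ e * i → e * i ≤ -1 → y i = x i) →
        f^[n] y 0 = f^[n] x 0 := fun x hx y hy hxy =>
    h y hy x hx fun i h1 h2 => hxy i (hea i h1 h2).2 (hea i h1 h2).1
  rcases Nat.eq_zero_or_pos n with rfl | hn
  · obtain ⟨r, hr⟩ := exists_radius hf.1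
    set K := a.natAbs + b.natAbs with hK
    refine ⟨1, e, K + r, le_rfl, he, fun x hx y hy hxy => ?_⟩
    have claim : ∀ m : ℕ, ∀ i : ℤ, -((K + r : ℕ) : ℤ) ≤ e * i → e * i ≤ -1 + m →
        y i = x i := by
      intro m
      induction m with
      | zero => intro i h1 h2; exact hxy i h1 (by simpa using h2)
      | succ m ih =>
        intro i h1 h2
        by_cases hlt : e * i ≤ -1 + m
        · exact ih i h1 hlt
        have := key (tau i x) (gls_tau hf i hx) (tau i y) (gls_tau hf i hy) (by
          intro k h3 h4
          refine ih (k + i) ?_ ?_ <;> rw [mul_add] <;> push_cast at * <;> linarith)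
        simpa [tau] using this
    refine hr x y fun i h1 h2 => claim (r + 1) i ?_ ?_ <;>
      rcases he with rfl | rfl <;> push_cast <;> omega
  · exact ⟨n, e, _, hn, he, key⟩

lemma good_nhd {f : (ℤ → A) → (ℤ → A)} (hf : IsCA f) {n : ℕ} {e : ℤ} {K : ℕ}
    (he : e = 1 ∨ e = -1)
    (h : ∀ x ∈ genLimitSet f, ∀ y ∈ genLimitSet f,
        (∀ i : ℤ, -(K : ℤ) ≤ e * i → e * i ≤ -1 → y i = x i) → f^[n] y 0 = f^[n] x 0) :
    ∃ G : Set (ℤ → A), IsOpen G ∧ genLimitSet f ⊆ G ∧ ∀ x ∈ G, ∀ y ∈ G,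
        (∀ i : ℤ, -(K : ℤ) ≤ e * i → e * i ≤ -1 → y i = x i) → f^[n] y 0 = f^[n] x 0 := by
  have hc := (gls_closed f).isCompact
  have cl : ∀ (g : (ℤ → A) → A), Continuous g →
      IsClopen {p : (ℤ → A) × (ℤ → A) | g p.2 = g p.1} := by
    intro g hg
    have : Continuous fun p : (ℤ → A) × (ℤ → A) => (g p.2, g p.1) := by fun_prop
    exact (isClopen_discrete {q : A × A | q.1 = q.2}).preimage this
  let D : Set ((ℤ → A) × (ℤ → A)) :=
    ⋂ i ∈ (Finset.Icc (-(K : ℤ)) K).filter (fun i => -(K : ℤ) ≤ e * i ∧ e * i ≤ -1),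
      {p | p.2 i = p.1 i}
  have hD : IsClosed D := by
    refine isClosed_biInter fun i _ => (cl (fun x => x i) (continuous_apply i)).1
  have hDm : ∀ p, p ∈ D ↔ ∀ i : ℤ, -(K : ℤ) ≤ e * i → e * i ≤ -1 → p.2 i = p.1 i := by
    intro p
    simp only [D, mem_iInter, Finset.mem_filter, Finset.mem_Icc]
    constructor
    · intro hp i h1 h2
      refine hp i ⟨?_, h1, h2⟩
      rcases he with rfl | rfl <;> omega
    · intro hp i h1
      exact hp i h1.2.1 h1.2.2
  obtain ⟨u, v, hu, hv, hsu, hsv, huv⟩ := generalized_tube_lemma hc hc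
    (n := Dᶜ ∪ {p | f^[n] p.2 0 = f^[n] p.1 0})
    (hD.isOpen_compl.union
      (cl (fun x => f^[n] x 0) ((continuous_apply 0).comp (hf.1.iterate n))).2)
    (by
      rintro ⟨x, y⟩ ⟨hx, hy⟩
      by_cases hp : (x, y) ∈ D
      · exact Or.inr (h x hx y hy ((hDm _).1 hp))
      · exact Or.inl hp)
  refine ⟨u ∩ v, hu.inter hv, subset_inter hsu hsv, fun x hx y hy hxy => ?_⟩
  rcases huv (show (x, y) ∈ u ×ˢ v from ⟨hx.1, hy.2⟩) with h1 | h1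
  · exact absurd ((hDm _).2 hxy) h1
  · exact h1

lemma gm_open {G : Set (ℤ → A)} (hG : IsOpen G) (M : ℕ) :
    IsOpen {y : ℤ → A | ∀ i : ℤ, -(M : ℤ) ≤ i → i ≤ M → tau i y ∈ G} := by
  have : {y : ℤ → A | ∀ i : ℤ, -(M : ℤ) ≤ i → i ≤ M → tau i y ∈ G} =
      ⋂ i ∈ Finset.Icc (-(M : ℤ)) M, tau i ⁻¹' G := by
    ext y; simp
  rw [this]
  exact isOpen_biInter_finset fun i _ => hG.preimage (tau_cont i)

lemma core {f : (ℤ → A) → (ℤ → A)} (hf : IsCA f)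
    (hob : EventuallyOblique f (genLimitSet f)) {x0 : ℤ → A} (hx0 : x0 ∈ genLimitSet f)
    (L : ℕ) (xu : ℤ → A) (Nu : ℕ) (t0 : ℕ) :
    ∃ t, t0 ≤ t ∧ ∃ z ∈ bx xu Nu, f^[t] z ∈ bx x0 L := by
  obtain ⟨n, e, K, hn, he, hob⟩ := oblique_pos hf hob
  obtain ⟨r, hr⟩ := exists_radius hf.1
  obtain ⟨G, hG, hgG, hGp⟩ := good_nhd hf he hob
  have good_at : ∀ (y y' : ℤ → A) (i : ℤ), tau i y ∈ G → tau i y' ∈ G →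
      (∀ k, e * k ≤ e * i - 1 → y' k = y k) → f^[n] y' i = f^[n] y i := by
    intro y y' i h1 h2 h3
    have := hGp _ h1 _ h2 (fun k _ hk => h3 (k + i) (by rw [mul_add]; linarith))
    rw [tau_comm_iter hf, tau_comm_iter hf] at this
    simpa [tau] using this
  have hgM : ∀ M : ℕ, genLimitSet f ⊆
      {y : ℤ → A | ∀ i : ℤ, -(M : ℤ) ≤ i → i ≤ M → tau i y ∈ G} :=
    fun M y hy i _ _ => hgG (gls_tau hf i hy)
  -- the screen
  obtain ⟨z, -, N0, T0, -, -, hz⟩ := screen hf.1 (gm_open hG (r * n)) (hgM (r * n)) xu 0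
  -- the enabling cylinder
  obtain ⟨v, Nv, hv⟩ := enabling (bx_open x0 L) hx0 (bx_self x0 L)
  obtain ⟨N1, hN1u, hN1v⟩ : ∃ N1 : ℕ, Nu ≤ N1 ∧ Nv ≤ N1 :=
    ⟨max Nu Nv, le_max_left _ _, le_max_right _ _⟩
  obtain ⟨R, hR⟩ : ∃ R : ℕ, R = r * (T0 + n) := ⟨_, rfl⟩
  obtain ⟨q, hq⟩ : ∃ q : ℕ, q = N1 + 1 + N0 + R := ⟨_, rfl⟩
  obtain ⟨p, hp⟩ : ∃ p : ℤ, p = -(e * q) := ⟨_, rfl⟩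
  have hep : e * p = -q := by rcases he with rfl | rfl <;> omega
  obtain ⟨s, hs⟩ : ∃ s : ℤ, s = -(N1 : ℤ) - 1 := ⟨_, rfl⟩
  -- consequence of lying in the screen
  have hscr : ∀ x : ℤ → A, (∀ i : ℤ, -(N0 : ℤ) ≤ i → i ≤ N0 → x (i + p) = z i) →
      ∀ t, T0 ≤ t → ∀ i : ℤ, -((r * n : ℕ) : ℤ) ≤ i → i ≤ (r * n : ℕ) →
        tau (i + p) (f^[t] x) ∈ G := by
    intro x hx t ht i h1 h2
    have := hz (tau p x) hx t ht i h1 h2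
    rw [tau_comm_iter hf] at this
    have e2 : tau (i + p) (f^[t] x) = tau i (tau p (f^[t] x)) := by
      funext k; simp only [tau]; congr 1; ring
    rw [e2]; exact this
  have hblock : ∀ x x' : ℤ → A,
      (∀ i : ℤ, -(N0 : ℤ) ≤ i → i ≤ N0 → x (i + p) = z i) →
      (∀ i : ℤ, -(N0 : ℤ) ≤ i → i ≤ N0 → x' (i + p) = z i) →
      (∀ i, e * i ≤ s → x' i = x i) →
      ∀ t, ∀ i, e * i ≤ -q → f^[t] x' i = f^[t] x i := by
    intro x x' hx hx' hxx t
    induction t using Nat.strong_induction_on with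
    | _ t ih =>
      intro i hi
      by_cases ht : t < T0 + n
      · refine propagate hf hr he x x' s hxx t i ?_
        have : r * t ≤ R := by rw [hR]; exact Nat.mul_le_mul_left r ht.le
        have h' : (r : ℤ) * t ≤ R := by exact_mod_cast this
        have : (q : ℤ) = N1 + 1 + N0 + R := by exact_mod_cast hq
        linarith
      · obtain ⟨t', rfl⟩ : ∃ t', t = n + t' := ⟨t - n, by omega⟩
        have iht := ih t' (by omega)
        rw [iterate_add_apply, iterate_add_apply]
        by_cases hfar : e * i ≤ -q - r * n
        · exact propagate hf hr he _ _ (-q) iht n i hfar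
        · have hb : -((r * n : ℕ) : ℤ) ≤ i - p ∧ i - p ≤ ((r * n : ℕ) : ℤ) := by
            push_cast
            rcases he with rfl | rfl <;> constructor <;> linarith
          have g1 := hscr x hx t' (by omega) (i - p) hb.1 hb.2
          have g2 := hscr x' hx' t' (by omega) (i - p) hb.1 hb.2
          rw [sub_add_cancel] at g1 g2
          exact good_at _ _ i g1 g2 fun k hk => iht k (by linarith)
  -- the wide window
  obtain ⟨M, hM⟩ : ∃ M : ℕ, M = q + L := ⟨_, rfl⟩
  obtain ⟨y, hy, N2, T1, hN2, -, hyG⟩ := screen hf.1 (gm_open hG M) (hgM M)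
    (fun i => if e * i ≤ s then z (i - p) else xu i) (q + N0 + N1)
  obtain ⟨y', hy', N3, T2, hN3, hsub, hyG'⟩ := screen hf.1 (gm_open hG M) (hgM M)
    (fun i => if e * i ≤ s then y i else v i) N2
  have hVsub : bx (fun i => if e * i ≤ s then y i else v i) N2 ⊆ bx v Nv := by
    intro x hx i h1 h2
    rw [hx i (by omega) (by omega)]
    beta_reduce
    rw [if_neg]
    rcases he with rfl | rfl <;> omega
  obtain ⟨t, ht, x, hx, hxO⟩ := hv y' (hVsub hy') N3 (hsub.trans hVsub)
    (t0 + T1 + T2 + n * (q + L))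
  obtain ⟨x', hx'⟩ : ∃ x' : ℤ → A, x' = fun i => if e * i ≤ s then x i else y i := ⟨_, rfl⟩
  have hxx : ∀ i, e * i ≤ s → x' i = x i := fun i hi => by rw [hx']; exact if_pos hi
  have hx2 := hsub hx
  have hxy : x' ∈ bx y N2 := by
    intro i h1 h2
    by_cases hi : e * i ≤ s
    · rw [hxx i hi, hx2 i h1 h2]; exact if_pos hi
    · rw [hx']; exact if_neg hi
  have hx's : ∀ i : ℤ, -(N0 : ℤ) ≤ i → i ≤ N0 → x' (i + p) = z i := by
    intro i h1 h2
    have hb : -((q + N0 + N1 : ℕ) : ℤ) ≤ i + p ∧ i + p ≤ (q + N0 + N1 : ℕ) ∧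
        e * (i + p) ≤ s := by
      rcases he with rfl | rfl <;> omega
    rw [hxy (i + p) (by omega) (by omega), hy (i + p) hb.1 hb.2.1]
    beta_reduce
    rw [if_pos hb.2.2]
    simp
  have hxs : ∀ i : ℤ, -(N0 : ℤ) ≤ i → i ≤ N0 → x (i + p) = z i := by
    intro i h1 h2
    rw [← hx's i h1 h2, hxx]
    rcases he with rfl | rfl <;> omega
  have hleft := hblock x x' hxs hx's hxx
  have hright : ∀ k : ℕ, k ≤ q + L → ∀ t, T1 + T2 + n * k ≤ t →
      ∀ i, e * i ≤ -q + k → f^[t] x' i = f^[t] x i := by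
    intro k
    induction k with
    | zero => intro _ t _ i hi; exact hleft t i (by simpa using hi)
    | succ k ih =>
      intro hk t ht i hi
      have hmul : n * (k + 1) = n * k + n := by ring
      obtain ⟨t', rfl⟩ : ∃ t', t = n + t' := ⟨t - n, by omega⟩
      by_cases hlt : e * i ≤ -q + k
      · exact ih (by omega) _ (by omega) i hlt
      rw [iterate_add_apply, iterate_add_apply]
      have hb : -(M : ℤ) ≤ i ∧ i ≤ M := by
        rcases he with rfl | rfl <;> omega
      exact good_at _ _ i (hyG' x hx t' (by omega) i hb.1 hb.2)
        (hyG x' hxy t' (by omega) i hb.1 hb.2)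
        fun j hj => ih (by omega) t' (by omega) j (by push_cast at hi; linarith)
  refine ⟨t, by omega, x', ?_, ?_⟩
  · intro i h1 h2
    rw [hxy i (by omega) (by omega), hy i (by omega) (by omega)]
    beta_reduce
    rw [if_neg]
    rcases he with rfl | rfl <;> omega
  · intro i h1 h2
    rw [hright (q + L) le_rfl t (by omega) i (by rcases he with rfl | rfl <;> omega)]
    exact hxO i h1 h2

lemma word_eq (x : ℤ → A) (i : ℤ) (n : ℕ) :
    word x i n = (List.range n).map fun k : ℕ => x (i + (k : ℤ)) := by
  simp only [word, List.bind_eq_flatMap, List.pure_def, ← List.map_eq_flatMap, List.map_map]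
  rfl

lemma mem_cylinder {w : List A} {i : ℤ} {x : ℤ → A} :
    x ∈ cylinder w i ↔ ∀ k : ℕ, ∀ h : k < w.length, x (i + k) = w[k] := by
  simp only [cylinder, mem_ofPred, word_eq]
  constructor
  · intro h k hk
    have := List.getElem_of_eq h (i := k) (by simpa using hk)
    simpa using this
  · intro h
    apply List.ext_getElem
    · simp
    · intro k h1 h2
      simpa using h k h2

lemma cylinder_nonempty [Nonempty A] (w : List A) (i : ℤ) : (cylinder w i).Nonempty := by
  obtain ⟨a⟩ := ‹Nonempty A›
  refine ⟨fun k => w.getD (k - i).toNat a, mem_cylinder.2 fun k hk => ?_⟩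
  simp [hk]

lemma cylinder_open (w : List A) (i : ℤ) : IsOpen (cylinder w i) := by
  rw [isOpen_iff_mem_nhds]
  intro x hx
  refine mem_of_superset ((bx_open x (i.natAbs + w.length)).mem_nhds (bx_self _ _)) ?_
  intro y hy
  rw [mem_cylinder] at hx ⊢
  intro k hk
  rw [← hx k hk]
  exact hy _ (by omega) (by omega)

lemma bx_cylinder (x : ℤ → A) (N : ℕ) : ∃ (u : List A) (j : ℤ), x ∈ cylinder u j ∧
    cylinder u j ⊆ bx x N := by
  refine ⟨(List.range (2 * N + 1)).map fun k : ℕ => x (-(N : ℤ) + (k : ℤ)), -N, ?_, ?_⟩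
  · rw [mem_cylinder]
    intro k hk
    simp
  · intro y hy i h1 h2
    rw [mem_cylinder] at hy
    have := hy (i + N).toNat (by simp; omega)
    have e : (-(N : ℤ) + ((i + N).toNat : ℤ)) = i := by omega
    simp only [e, List.getElem_map, List.getElem_range] at this
    exact this

end Top

/-- if the restriction of `f` to `ω̃(f)` is eventually oblique, then a word
`w` occurs in `ω̃(f)` iff the empty word enables it: for every cylinder `[u]_j` there are
infinitely many `t` with `f^t([u]_j) ∩ [w] ≠ ∅`. -/
theorem stmt11 [Fintype A] [Nonempty A] [TopologicalSpace A] [DiscreteTopology A]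
    (f : (ℤ → A) → (ℤ → A)) (hf : IsCA f)
    (hob : EventuallyOblique f (genLimitSet f)) :
    ∀ w : List A, w ∈ lang (genLimitSet f) ↔
      ∀ (u : List A) (j : ℤ),
        {t : ℕ | (f^[t] '' cylinder u j ∩ cylinder w 0).Nonempty}.Infinite := by
  intro w
  constructor
  · rintro ⟨x, hx, i, hw⟩ u j
    have hx' := gls_tau hf i hx
    obtain ⟨xu, hxu⟩ := cylinder_nonempty u j
    obtain ⟨Nu, hNu⟩ := exists_bx (cylinder_open u j) hxu
    refine Set.infinite_of_forall_exists_gt fun t0 => ?_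
    obtain ⟨t, ht, z, hz, hzw⟩ := core hf hob hx' w.length xu Nu (t0 + 1)
    refine ⟨t, ⟨f^[t] z, ⟨z, hNu hz, rfl⟩, ?_⟩, by omega⟩
    have hw' : x ∈ cylinder w i := hw
    rw [mem_cylinder] at hw' ⊢
    intro k hk
    rw [hzw _ (by omega) (by omega), ← hw' k hk]
    simp only [tau]; congr 1; omega
  · intro h
    by_contra hw
    have hsub : genLimitSet f ⊆ (cylinder w 0)ᶜ := fun x hx hxw => hw ⟨x, hx, 0, hxw⟩
    have hop : IsOpen (cylinder w 0)ᶜ := by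
      rw [isOpen_compl_iff, show cylinder w 0 = ⋂ (k : ℕ) (hk : k < w.length),
        {x : ℤ → A | x (0 + k) = w[k]} by ext x; simp [mem_cylinder]]
      exact isClosed_iInter fun k => isClosed_iInter fun hk =>
        (isClosed_discrete ({w[k]} : Set A)).preimage
          (continuous_apply (A := fun _ : ℤ => A) (0 + (k : ℤ)))
    obtain ⟨y, -, M, T, -, -, hy⟩ := screen hf.1 hop hsub (fun _ => Classical.arbitrary A) 0
    obtain ⟨u, j, -, huj⟩ := bx_cylinder y M
    obtain ⟨t, ⟨_, ⟨z, hz, rfl⟩, hzw⟩, ht⟩ := (h u j).exists_gt T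
    exact hy z (huj hz) t ht.le hzw

end Gls
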